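/- Let p ∈ Δ*_m, q ∈ Δ*_n, c ∈ ℝ^{m×n} and β > 0. Let (π_t) be the iterates of the standard Sinkhorn algorithm at fixed inverse temperature β (i.e. Annealed Sinkhorn with constant schedule β_t = β). Then for every t ≥ 1: KL(π_t𝟙 | p) ≤ (inf_{π ∈ Γ(p,q)} KL(π | π_0)) / t. -/

import Mathlib

open Finset Filter Topology ENNReal

noncomputable section

/-- Frobenius inner product `⟨c, π⟩ = ∑_{ij} c_ij π_ij`. -/
def frob {m n : ℕ} (c π : Matrix (Fin m) (Fin n) ℝ) : ℝ := ∑ i, ∑ j, c i j * π i j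

/-- Row sums `π𝟙`. -/
def rowSum {m n : ℕ} (π : Matrix (Fin m) (Fin n) ℝ) : Fin m → ℝ := fun i => ∑ j, π i j

/-- Column sums `πᵀ𝟙`. -/
def colSum {m n : ℕ} (π : Matrix (Fin m) (Fin n) ℝ) : Fin n → ℝ := fun j => ∑ i, π i j

/-- Kullback–Leibler divergence between nonnegative vectors. -/
def KLvec {k : ℕ} (a b : Fin k → ℝ) : ℝ := ∑ i, (a i * Real.log (a i / b i) - a i + b i)

/-- Kullback–Leibler divergence between nonnegative matrices. -/
def KLmat {m n : ℕ} (a b : Matrix (Fin m) (Fin n) ℝ) : ℝ :=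
  ∑ i, ∑ j, (a i j * Real.log (a i j / b i j) - a i j + b i j)

/-- The tipless simplex `Δ*_k`: strictly positive entries summing to 1. -/
def simplexPos (k : ℕ) : Set (Fin k → ℝ) := {p | (∀ i, 0 < p i) ∧ ∑ i, p i = 1}

/-- The simplex `Δ_k`: nonnegative entries summing to 1. -/
def simplexNN (k : ℕ) : Set (Fin k → ℝ) := {p | (∀ i, 0 ≤ p i) ∧ ∑ i, p i = 1}

/-- Transport plans `Γ(p, q)`. -/
def Gamma {m n : ℕ} (p : Fin m → ℝ) (q : Fin n → ℝ) : Set (Matrix (Fin m) (Fin n) ℝ) :=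
  {π | (∀ i j, 0 ≤ π i j) ∧ rowSum π = p ∧ colSum π = q}

/-- Half-relaxed plans `Γ(*, q)`. -/
def GammaStar {m n : ℕ} (q : Fin n → ℝ) : Set (Matrix (Fin m) (Fin n) ℝ) :=
  {π | (∀ i j, 0 ≤ π i j) ∧ colSum π = q}

/-- Reference plan `π^ref = (mn)⁻¹ 𝟙𝟙ᵀ`. -/
def piRef (m n : ℕ) : Matrix (Fin m) (Fin n) ℝ := fun _ _ => 1 / (m * n)

/-- Optimal transport value `OT(p,q)`. -/
def OTval {m n : ℕ} (c : Matrix (Fin m) (Fin n) ℝ) (p : Fin m → ℝ) (q : Fin n → ℝ) : ℝ :=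
  ⨅ π : Gamma p q, frob c π.1

/-- Entropic OT objective `⟨c,π⟩ + β⁻¹ KL(π|π^ref)`. -/
def eotObj {m n : ℕ} (c : Matrix (Fin m) (Fin n) ℝ) (β : ℝ) (π : Matrix (Fin m) (Fin n) ℝ) : ℝ :=
  frob c π + β⁻¹ * KLmat π (piRef m n)

/-- Entropic OT value `EOT_β(p,q)`. -/
def eotVal {m n : ℕ} (c : Matrix (Fin m) (Fin n) ℝ) (β : ℝ) (p : Fin m → ℝ) (q : Fin n → ℝ) : ℝ :=
  ⨅ π : Gamma p q, eotObj c β π.1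

/-- Gibbs kernel `K = e^{-βc}` (entrywise). -/
def gibbs {m n : ℕ} (c : Matrix (Fin m) (Fin n) ℝ) (β : ℝ) : Matrix (Fin m) (Fin n) ℝ :=
  fun i j => Real.exp (-(β * c i j))

/-- Annealed Sinkhorn scaling vectors `(a_t, b_t)`:
`b_0 = 𝟙`, `a_{t+1} = p ⊘ (K_t b_t)`, `b_{t+1} = q ⊘ (K_{t+1}ᵀ a_{t+1})`, `K_t = e^{-β_t c}`. -/
def sinkAB {m n : ℕ} (p : Fin m → ℝ) (q : Fin n → ℝ) (c : Matrix (Fin m) (Fin n) ℝ)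
    (β : ℕ → ℝ) : ℕ → (Fin m → ℝ) × (Fin n → ℝ)
  | 0 => (fun _ => 1, fun _ => 1)
  | t + 1 =>
    let prev := sinkAB p q c β t
    let a : Fin m → ℝ := fun i => p i / ∑ j, gibbs c (β t) i j * prev.2 j
    (a, fun j => q j / ∑ i, gibbs c (β (t + 1)) i j * a i)

/-- Annealed Sinkhorn primal iterate `π_t = diag(a_t) K_t diag(b_t)`. -/
def sinkPlan {m n : ℕ} (p : Fin m → ℝ) (q : Fin n → ℝ) (c : Matrix (Fin m) (Fin n) ℝ)
    (β : ℕ → ℝ) (t : ℕ) : Matrix (Fin m) (Fin n) ℝ :=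
  fun i j => (sinkAB p q c β t).1 i * gibbs c (β t) i j * (sinkAB p q c β t).2 j

/-- `ℓ¹` norm of a vector. -/
def l1vec {k : ℕ} (a : Fin k → ℝ) : ℝ := ∑ i, |a i|

/-- Oscillation semi-norm `‖c‖_osc = max c - min c`. -/
def cOsc {m n : ℕ} (c : Matrix (Fin m) (Fin n) ℝ) : ℝ :=
  (⨆ i, ⨆ j, c i j) - ⨅ i, ⨅ j, c i j

/-- `‖log p‖_∞`. -/
def logSup {k : ℕ} (p : Fin k → ℝ) : ℝ := ⨆ i, |Real.log (p i)|

/-- The rounding ("projection") procedure of Altschuler et al. (Algorithm 3). -/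
def roundPlan {m n : ℕ} (p : Fin m → ℝ) (q : Fin n → ℝ) (π : Matrix (Fin m) (Fin n) ℝ) :
    Matrix (Fin m) (Fin n) ℝ :=
  let π' : Matrix (Fin m) (Fin n) ℝ := fun i j => min 1 (p i / rowSum π i) * π i j
  let π'' : Matrix (Fin m) (Fin n) ℝ := fun i j => π' i j * min 1 (q j / colSum π' j)
  fun i j => π'' i j +
    (p i - rowSum π'' i) * (q j - colSum π'' j) / l1vec (fun i' => p i' - rowSum π'' i')

/-- Relaxed entropic objective `F^reg(π) = ⟨c,π⟩ + α⁻¹ KL(π𝟙|p) + β⁻¹ KL(π|π^ref)`. -/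
def Freg {m n : ℕ} (c : Matrix (Fin m) (Fin n) ℝ) (p : Fin m → ℝ) (α β : ℝ)
    (π : Matrix (Fin m) (Fin n) ℝ) : ℝ :=
  frob c π + α⁻¹ * KLvec (rowSum π) p + β⁻¹ * KLmat π (piRef m n)

/-- Dual functional for the relaxed entropic problem. -/
def dualFun {m n : ℕ} (p : Fin m → ℝ) (q : Fin n → ℝ) (c : Matrix (Fin m) (Fin n) ℝ)
    (α β : ℝ) (u : Fin m → ℝ) (v : Fin n → ℝ) : ℝ :=
  α⁻¹ * (∑ i, (1 - Real.exp (-(α * u i))) * p i) + ∑ j, v j * q j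
    - β⁻¹ * (∑ i, ∑ j, Real.exp (β * (u i + v j - c i j)) * piRef m n i j) + β⁻¹

/-- Dual functional of entropic OT. -/
def eotDual {m n : ℕ} (p : Fin m → ℝ) (q : Fin n → ℝ) (c : Matrix (Fin m) (Fin n) ℝ)
    (β : ℝ) (u : Fin m → ℝ) (v : Fin n → ℝ) : ℝ :=
  ∑ i, p i * u i + ∑ j, q j * v j
    + β⁻¹ * (1 - ∑ i, ∑ j, piRef m n i j * Real.exp (β * (u i + v j - c i j)))

/-- The set `C_β` of plans of the form `diag(a) e^{-βc} diag(b)` with `a, b ≥ 0`. -/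
def scalingSet {m n : ℕ} (c : Matrix (Fin m) (Fin n) ℝ) (β : ℝ) :
    Set (Matrix (Fin m) (Fin n) ℝ) :=
  {π | ∃ a : Fin m → ℝ, ∃ b : Fin n → ℝ, (∀ i, 0 ≤ a i) ∧ (∀ j, 0 ≤ b j) ∧
    π = fun i j => a i * Real.exp (-(β * c i j)) * b j}


/-- Rescale rows to have row sums `p`. -/
def rowScale {m n : ℕ} (p : Fin m → ℝ) (A : Matrix (Fin m) (Fin n) ℝ) :
    Matrix (Fin m) (Fin n) ℝ := fun i j => p i / rowSum A i * A i j

/-- Rescale columns to have column sums `q`. -/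
def colScale {m n : ℕ} (q : Fin n → ℝ) (A : Matrix (Fin m) (Fin n) ℝ) :
    Matrix (Fin m) (Fin n) ℝ := fun i j => A i j * (q j / colSum A j)

theorem colScale_eq {m n : ℕ} (q : Fin n → ℝ) (A : Matrix (Fin m) (Fin n) ℝ) :
    colScale q A = (rowScale q A.transpose).transpose := by
  ext i j
  simp [colScale, rowScale, rowSum, colSum, Matrix.transpose, mul_comm]

theorem KLmat_transpose {m n : ℕ} (A B : Matrix (Fin m) (Fin n) ℝ) :
    KLmat A.transpose B.transpose = KLmat A B := by
  unfold KLmat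
  rw [Finset.sum_comm]
  rfl

theorem rowSum_transpose {m n : ℕ} (A : Matrix (Fin m) (Fin n) ℝ) :
    rowSum A.transpose = colSum A := rfl

theorem rowSum_pos {m n : ℕ} (hn : 0 < n) (A : Matrix (Fin m) (Fin n) ℝ)
    (hA : ∀ i j, 0 < A i j) (i : Fin m) : 0 < rowSum A i :=
  Finset.sum_pos (fun j _ => hA i j) ⟨⟨0, hn⟩, Finset.mem_univ _⟩

theorem rowScale_pos {m n : ℕ} (hn : 0 < n) (A : Matrix (Fin m) (Fin n) ℝ)
    (hA : ∀ i j, 0 < A i j) (p : Fin m → ℝ) (hp : ∀ i, 0 < p i) (i : Fin m) (j : Fin n) :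
    0 < rowScale p A i j :=
  mul_pos (div_pos (hp i) (rowSum_pos hn A hA i)) (hA i j)

theorem rowSum_rowScale {m n : ℕ} (hn : 0 < n) (A : Matrix (Fin m) (Fin n) ℝ)
    (hA : ∀ i j, 0 < A i j) (p : Fin m → ℝ) : rowSum (rowScale p A) = p := by
  funext i
  have h := rowSum_pos hn A hA i
  have : rowSum (rowScale p A) i = p i / rowSum A i * rowSum A i := by
    simp only [rowSum, rowScale, Finset.mul_sum]
  rw [this]
  field_simp

/-- Data processing for row sums. -/
theorem KL_rowSum_le {m n : ℕ} (hn : 0 < n) (A B : Matrix (Fin m) (Fin n) ℝ)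
    (hA : ∀ i j, 0 < A i j) (hB : ∀ i j, 0 < B i j) :
    KLvec (rowSum A) (rowSum B) ≤ KLmat A B := by
  unfold KLvec KLmat
  apply Finset.sum_le_sum
  intro i _
  have ha := rowSum_pos hn A hA i
  have hb := rowSum_pos hn B hB i
  set a := rowSum A i with had
  set b := rowSum B i with hbd
  have key : ∀ j, A i j * Real.log (a / b) + A i j - B i j * (a / b) ≤
      A i j * Real.log (A i j / B i j) := by
    intro j
    have h1 := hA i j
    have h2 := hB i j
    have h3 := Real.log_le_sub_one_of_pos (show 0 < (a / b) / (A i j / B i j) by positivity)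
    rw [Real.log_div (by positivity) (by positivity)] at h3
    have h4 := mul_le_mul_of_nonneg_left h3 h1.le
    have h5 : A i j * ((a / b) / (A i j / B i j) - 1) = B i j * (a / b) - A i j := by
      field_simp
    rw [h5] at h4
    linarith
  have h6 := Finset.sum_le_sum (fun j (_ : j ∈ Finset.univ) => key j)
  rw [Finset.sum_sub_distrib, Finset.sum_add_distrib, ← Finset.sum_mul, ← Finset.sum_mul] at h6
  rw [Finset.sum_add_distrib, Finset.sum_sub_distrib]
  have ea : ∑ j, A i j = a := rfl
  have eb : ∑ j, B i j = b := rfl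
  rw [ea, eb] at h6
  rw [ea, eb]
  have : b * (a / b) = a := by field_simp
  linarith

theorem KLvec_nonneg {k : ℕ} (a b : Fin k → ℝ) (ha : ∀ i, 0 < a i) (hb : ∀ i, 0 < b i) :
    0 ≤ KLvec a b := by
  apply Finset.sum_nonneg
  intro i _
  have h1 := ha i
  have h2 := hb i
  have h3 := Real.log_le_sub_one_of_pos (show 0 < b i / a i by positivity)
  have h4 := mul_le_mul_of_nonneg_left h3 h1.le
  rw [Real.log_div h2.ne' h1.ne'] at h4
  rw [Real.log_div h1.ne' h2.ne']
  have h5 : a i * (b i / a i - 1) = b i - a i := by field_simp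
  linarith

/-- Pythagorean identity for the row projection. -/
theorem KL_pyth {m n : ℕ} (hn : 0 < n) (A P : Matrix (Fin m) (Fin n) ℝ)
    (hA : ∀ i j, 0 < A i j) (p : Fin m → ℝ) (hp : ∀ i, 0 < p i) (hP : ∀ i j, 0 ≤ P i j) :
    KLmat P A - KLmat P (rowScale p A) =
      ∑ i, (rowSum P i * Real.log (p i / rowSum A i) - p i + rowSum A i) := by
  unfold KLmat
  rw [← Finset.sum_sub_distrib]
  apply Finset.sum_congr rfl
  intro i _
  have e := congrFun (rowSum_rowScale hn A hA p) i
  have hr := rowSum_pos hn A hA i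
  rw [← Finset.sum_sub_distrib]
  have : ∀ j, (P i j * Real.log (P i j / A i j) - P i j + A i j) -
      (P i j * Real.log (P i j / rowScale p A i j) - P i j + rowScale p A i j) =
      P i j * Real.log (p i / rowSum A i) - rowScale p A i j + A i j := by
    intro j
    rcases (hP i j).eq_or_lt with h | h
    · rw [← h]; ring
    · have h1 := hA i j
      have h2 := div_pos (hp i) hr
      have h3 : Real.log (rowScale p A i j) = Real.log (p i / rowSum A i) + Real.log (A i j) :=
        Real.log_mul h2.ne' h1.ne'
      rw [Real.log_div h.ne' h1.ne', Real.log_div h.ne' (rowScale_pos hn A hA p hp i j).ne', h3]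
      ring
  rw [Finset.sum_congr rfl (fun j _ => this j), Finset.sum_add_distrib, Finset.sum_sub_distrib,
    ← Finset.sum_mul]
  have e' : ∑ j, rowScale p A i j = p i := e
  rw [e']
  rfl

theorem KLmat_self {m n : ℕ} (A : Matrix (Fin m) (Fin n) ℝ) (hA : ∀ i j, 0 < A i j) :
    KLmat A A = 0 := by
  unfold KLmat
  apply Finset.sum_eq_zero
  intro i _
  apply Finset.sum_eq_zero
  intro j _
  rw [div_self (hA i j).ne']
  simp

theorem KL_pyth' {m n : ℕ} (hn : 0 < n) (A P : Matrix (Fin m) (Fin n) ℝ)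
    (hA : ∀ i j, 0 < A i j) (p : Fin m → ℝ) (hp : ∀ i, 0 < p i) (hP : ∀ i j, 0 ≤ P i j)
    (hr : rowSum P = p) :
    KLmat P A - KLmat P (rowScale p A) = KLvec p (rowSum A) := by
  rw [KL_pyth hn A P hA p hp hP, hr]
  rfl

theorem KL_scale_left {m n : ℕ} (hn : 0 < n) (A : Matrix (Fin m) (Fin n) ℝ)
    (hA : ∀ i j, 0 < A i j) (p : Fin m → ℝ) (hp : ∀ i, 0 < p i) :
    KLmat (rowScale p A) A = KLvec p (rowSum A) := by
  have h := rowScale_pos hn A hA p hp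
  have := KL_pyth' hn A _ hA p hp (fun i j => (h i j).le) (rowSum_rowScale hn A hA p)
  rw [KLmat_self _ h] at this
  linarith

theorem KL_scale_right {m n : ℕ} (hn : 0 < n) (A : Matrix (Fin m) (Fin n) ℝ)
    (hA : ∀ i j, 0 < A i j) (p : Fin m → ℝ) (hp : ∀ i, 0 < p i) :
    KLmat A (rowScale p A) = KLvec (rowSum A) p := by
  have := KL_pyth hn A A hA p hp (fun i j => (hA i j).le)
  rw [KLmat_self _ hA] at this
  have e : KLmat A (rowScale p A) =
    -∑ i, (rowSum A i * Real.log (p i / rowSum A i) - p i + rowSum A i) := by linarith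
  rw [e, KLvec, ← Finset.sum_neg_distrib]
  apply Finset.sum_congr rfl
  intro i _
  have hr := rowSum_pos hn A hA i
  rw [Real.log_div (hp i).ne' hr.ne', Real.log_div hr.ne' (hp i).ne']
  ring


theorem colScale_pos {m n : ℕ} (hm : 0 < m) (A : Matrix (Fin m) (Fin n) ℝ)
    (hA : ∀ i j, 0 < A i j) (q : Fin n → ℝ) (hq : ∀ i, 0 < q i) (i : Fin m) (j : Fin n) :
    0 < colScale q A i j := by
  rw [colScale_eq]
  exact rowScale_pos hm A.transpose (fun i j => hA j i) q hq j i

theorem colSum_colScale {m n : ℕ} (hm : 0 < m) (A : Matrix (Fin m) (Fin n) ℝ)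
    (hA : ∀ i j, 0 < A i j) (q : Fin n → ℝ) : colSum (colScale q A) = q := by
  rw [colScale_eq]
  exact rowSum_rowScale hm A.transpose (fun i j => hA j i) q

/-- The row error after a step is at most the column error at the half step. -/
theorem step_row {m n : ℕ} (hm : 0 < m) (hn : 0 < n) (A : Matrix (Fin m) (Fin n) ℝ)
    (hA : ∀ i j, 0 < A i j) (p : Fin m → ℝ) (hp : ∀ i, 0 < p i)
    (q : Fin n → ℝ) (hq : ∀ i, 0 < q i) :
    KLvec (rowSum (colScale q (rowScale p A))) p ≤ KLvec q (colSum (rowScale p A)) := by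
  have hB := rowScale_pos hn A hA p hp
  have hC := colScale_pos hm _ hB q hq
  have h1 := KL_rowSum_le hn _ _ hC hB
  rw [rowSum_rowScale hn A hA p] at h1
  refine h1.trans_eq ?_
  rw [colScale_eq, ← KLmat_transpose, Matrix.transpose_transpose]
  exact KL_scale_left hm (rowScale p A).transpose (fun i j => hB j i) q hq

/-- Monotonicity. -/
theorem step_mono {m n : ℕ} (hm : 0 < m) (hn : 0 < n) (A : Matrix (Fin m) (Fin n) ℝ)
    (hA : ∀ i j, 0 < A i j) (p : Fin m → ℝ) (hp : ∀ i, 0 < p i)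
    (q : Fin n → ℝ) (hq : ∀ i, 0 < q i) (hc : colSum A = q) :
    KLvec (rowSum (colScale q (rowScale p A))) p ≤ KLvec (rowSum A) p := by
  refine (step_row hm hn A hA p hp q hq).trans ?_
  have hB := rowScale_pos hn A hA p hp
  rw [← KL_scale_right hn A hA p hp, ← KLmat_transpose]
  have := KL_rowSum_le hm A.transpose (rowScale p A).transpose (fun i j => hA j i)
    (fun i j => hB j i)
  rwa [rowSum_transpose, rowSum_transpose, hc] at this

/-- Descent. -/
theorem step_descent {m n : ℕ} (hm : 0 < m) (hn : 0 < n) (A : Matrix (Fin m) (Fin n) ℝ)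
    (hA : ∀ i j, 0 < A i j) (p : Fin m → ℝ) (hp : ∀ i, 0 < p i)
    (q : Fin n → ℝ) (hq : ∀ i, 0 < q i) (P : Matrix (Fin m) (Fin n) ℝ) (hP : P ∈ Gamma p q) :
    KLvec (rowSum (colScale q (rowScale p A))) p + KLmat P (colScale q (rowScale p A))
      ≤ KLmat P A := by
  obtain ⟨h0, hr, hc⟩ := hP
  have hB := rowScale_pos hn A hA p hp
  have h1 := KL_pyth' hn A P hA p hp h0 hr
  have h2 := KLvec_nonneg p (rowSum A) hp (rowSum_pos hn A hA)
  have h3 := step_row hm hn A hA p hp q hq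
  have h4 := KL_pyth' hm (rowScale p A).transpose P.transpose (fun i j => hB j i) q hq
    (fun i j => h0 j i) hc
  rw [KLmat_transpose, rowSum_transpose, ← KLmat_transpose P.transpose,
    Matrix.transpose_transpose, ← colScale_eq] at h4
  linarith


theorem KLmat_nonneg {m n : ℕ} (P A : Matrix (Fin m) (Fin n) ℝ)
    (hA : ∀ i j, 0 < A i j) (hP : ∀ i j, 0 ≤ P i j) : 0 ≤ KLmat P A := by
  apply Finset.sum_nonneg
  intro i _
  apply Finset.sum_nonneg
  intro j _
  rcases (hP i j).eq_or_lt with h | h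
  · rw [← h]; simpa using (hA i j).le
  · have := KLvec_nonneg (k := 1) (fun _ => P i j) (fun _ => A i j) (fun _ => h) (fun _ => hA i j)
    simpa [KLvec] using this

theorem sinkAB_pos {m n : ℕ} (hm : 0 < m) (hn : 0 < n) (p : Fin m → ℝ) (hp : ∀ i, 0 < p i)
    (q : Fin n → ℝ) (hq : ∀ i, 0 < q i) (c : Matrix (Fin m) (Fin n) ℝ) (β : ℕ → ℝ) (t : ℕ) :
    (∀ i, 0 < (sinkAB p q c β t).1 i) ∧ (∀ j, 0 < (sinkAB p q c β t).2 j) := by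
  induction t with
  | zero => simp [sinkAB]
  | succ t ih =>
    have h1 : ∀ i, 0 < (sinkAB p q c β (t + 1)).1 i := fun i =>
      div_pos (hp i) (Finset.sum_pos (fun j _ => mul_pos (Real.exp_pos _) (ih.2 j))
        ⟨⟨0, hn⟩, Finset.mem_univ _⟩)
    exact ⟨h1, fun j => div_pos (hq j) (Finset.sum_pos
      (fun i _ => mul_pos (Real.exp_pos _) (h1 i)) ⟨⟨0, hm⟩, Finset.mem_univ _⟩)⟩

theorem sinkPlan_pos {m n : ℕ} (hm : 0 < m) (hn : 0 < n) (p : Fin m → ℝ) (hp : ∀ i, 0 < p i)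
    (q : Fin n → ℝ) (hq : ∀ i, 0 < q i) (c : Matrix (Fin m) (Fin n) ℝ) (β : ℕ → ℝ) (t : ℕ)
    (i : Fin m) (j : Fin n) : 0 < sinkPlan p q c β t i j :=
  mul_pos (mul_pos ((sinkAB_pos hm hn p hp q hq c β t).1 i) (Real.exp_pos _))
    ((sinkAB_pos hm hn p hp q hq c β t).2 j)

theorem sinkPlan_succ {m n : ℕ} (hm : 0 < m) (hn : 0 < n) (p : Fin m → ℝ) (hp : ∀ i, 0 < p i)
    (q : Fin n → ℝ) (hq : ∀ i, 0 < q i) (c : Matrix (Fin m) (Fin n) ℝ) (β : ℝ) (t : ℕ) :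
    sinkPlan p q c (fun _ => β) (t + 1) =
      colScale q (rowScale p (sinkPlan p q c (fun _ => β) t)) := by
  have hab := sinkAB_pos hm hn p hp q hq c (fun _ => β) t
  have hab' := sinkAB_pos hm hn p hp q hq c (fun _ => β) (t + 1)
  set a := (sinkAB p q c (fun _ => β) t).1 with ha
  set b := (sinkAB p q c (fun _ => β) t).2 with hb
  set a' := (sinkAB p q c (fun _ => β) (t + 1)).1 with ha'
  have e1 : ∀ i, a' i = p i / ∑ j, gibbs c β i j * b j := fun i => rfl
  have e2 : ∀ j, (sinkAB p q c (fun _ => β) (t + 1)).2 j = q j / ∑ i, gibbs c β i j * a' i :=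
    fun j => rfl
  have hs : ∀ i, rowSum (sinkPlan p q c (fun _ => β) t) i = a i * ∑ j, gibbs c β i j * b j := by
    intro i
    rw [Finset.mul_sum]
    exact Finset.sum_congr rfl (fun j _ => mul_assoc _ _ _)
  have hpos : ∀ i, 0 < ∑ j, gibbs c β i j * b j := fun i =>
    Finset.sum_pos (fun j _ => mul_pos (Real.exp_pos _) (hab.2 j)) ⟨⟨0, hn⟩, Finset.mem_univ _⟩
  have hpos' : ∀ j, 0 < ∑ i, gibbs c β i j * a' i := fun j =>
    Finset.sum_pos (fun i _ => mul_pos (Real.exp_pos _) (hab'.1 i)) ⟨⟨0, hm⟩, Finset.mem_univ _⟩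
  have hR : ∀ i j, rowScale p (sinkPlan p q c (fun _ => β) t) i j = a' i * gibbs c β i j * b j := by
    intro i j
    have h1 := hab.1 i
    have h2 := hpos i
    have h3 : sinkPlan p q c (fun _ => β) t i j = a i * gibbs c β i j * b j := rfl
    rw [rowScale, hs, h3, e1]
    generalize (∑ j, gibbs c β i j * b j) = S at *
    field_simp
  ext i j
  have hC : colSum (rowScale p (sinkPlan p q c (fun _ => β) t)) j =
      b j * ∑ i, gibbs c β i j * a' i := by
    rw [Finset.mul_sum]
    refine Finset.sum_congr rfl (fun i _ => ?_)
    rw [hR]; ring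
  have h3 : sinkPlan p q c (fun _ => β) (t + 1) i j =
    a' i * gibbs c β i j * (q j / ∑ i, gibbs c β i j * a' i) := rfl
  rw [colScale, hC, hR, h3]
  have h1 := hab.2 j
  have h2 := hpos' j
  generalize (∑ i, gibbs c β i j * a' i) = S at *
  field_simp

theorem simplexPos_pos {k : ℕ} {p : Fin k → ℝ} (hp : p ∈ simplexPos k) : 0 < k := by
  rcases Nat.eq_zero_or_pos k with h | h
  · subst h
    have := hp.2
    simp at this
  · exact h

theorem rate_aux {m n : ℕ} (hm : 0 < m) (hn : 0 < n) (p : Fin m → ℝ) (hp : ∀ i, 0 < p i)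
    (q : Fin n → ℝ) (hq : ∀ i, 0 < q i) (c : Matrix (Fin m) (Fin n) ℝ) (β : ℝ)
    (P : Matrix (Fin m) (Fin n) ℝ) (hP : P ∈ Gamma p q) (t : ℕ) :
    ((t : ℝ) + 1) * KLvec (rowSum (sinkPlan p q c (fun _ => β) (t + 1))) p +
      KLmat P (sinkPlan p q c (fun _ => β) (t + 1)) ≤
      KLmat P (sinkPlan p q c (fun _ => β) 0) := by
  have hpos := sinkPlan_pos hm hn p hp q hq c (fun _ => β)
  have hsucc := sinkPlan_succ hm hn p hp q hq c β
  induction t with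
  | zero =>
    have := step_descent hm hn _ (hpos 0) p hp q hq P hP
    rw [← hsucc] at this
    simpa using this
  | succ t ih =>
    have h1 := step_descent hm hn _ (hpos (t + 1)) p hp q hq P hP
    have hc : colSum (sinkPlan p q c (fun _ => β) (t + 1)) = q := by
      rw [hsucc]
      exact colSum_colScale hm _ (rowScale_pos hn _ (hpos t) p hp) q
    have h2 := step_mono hm hn _ (hpos (t + 1)) p hp q hq hc
    rw [← hsucc] at h1 h2
    have h3 := mul_le_mul_of_nonneg_left h2 (show (0 : ℝ) ≤ (t : ℝ) + 1 by positivity)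
    push_cast
    linarith

/-- mirror-descent rate for standard Sinkhorn, Eq. (9).
For the standard Sinkhorn iterates at fixed inverse temperature `β`,
`KL(π_t𝟙|p) ≤ (inf_{π ∈ Γ(p,q)} KL(π|π_0)) / t` for all `t ≥ 1`. -/
theorem sinkhorn_marginal_rate
    {m n : ℕ} (p : Fin m → ℝ) (q : Fin n → ℝ) (c : Matrix (Fin m) (Fin n) ℝ)
    (hp : p ∈ simplexPos m) (hq : q ∈ simplexPos n)
    (β : ℝ) (hβ : 0 < β) :
    ∀ t : ℕ, 1 ≤ t →
      KLvec (rowSum (sinkPlan p q c (fun _ => β) t)) p ≤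
        (⨅ π : Gamma p q, KLmat π.1 (sinkPlan p q c (fun _ => β) 0)) / (t : ℝ) := by
  intro t ht
  have hm := simplexPos_pos hp
  have hn := simplexPos_pos hq
  obtain ⟨hp0, hp1⟩ := hp
  obtain ⟨hq0, hq1⟩ := hq
  have hne : Nonempty (Gamma p q) := by
    refine ⟨⟨fun i j => p i * q j, fun i j => (mul_pos (hp0 i) (hq0 j)).le, ?_, ?_⟩⟩
    · funext i
      simp only [rowSum]
      rw [← Finset.mul_sum, hq1, mul_one]
    · funext j
      simp only [colSum]
      rw [← Finset.sum_mul, hp1, one_mul]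
  obtain ⟨s, rfl⟩ : ∃ s, t = s + 1 := ⟨t - 1, by omega⟩
  have hs : (0 : ℝ) < ((s + 1 : ℕ) : ℝ) := by positivity
  rw [le_div_iff₀ hs]
  apply le_ciInf
  intro P
  have h1 := rate_aux hm hn p hp0 q hq0 c β P.1 P.2 s
  have h2 := KLmat_nonneg P.1 _ (sinkPlan_pos hm hn p hp0 q hq0 c (fun _ => β) (s + 1)) P.2.1
  push_cast
  linarith

end
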